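/- arXiv:1707.07868 — 8 statements merged into one kernel-verified Lean document; each statement's English description precedes it below -/
import Mathlib

section
/- For all complex numbers a, b, c, d, x, y, z with ad − bc = 1 and a + bz ≠ 0, the cubic function f(x, y, z) = (xz − y)³ satisfies the SL₂-invariance functional equation f(x, y, z) = (a + bz)³ · f(ax + by, cx + dy, (c + dz)/(a + bz)); that is, (xz − y)³ = (a + bz)³ · ((ax + by)·((c + dz)/(a + bz)) − (cx + dy))³. -/
/-- SL₂-invariance of the cubic `f(x,y,z) = (xz − y)³`: for `ad − bc = 1` and
`a + bz ≠ 0`, one has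
`(xz − y)³ = (a + bz)³ · ((ax + by)·((c + dz)/(a + bz)) − (cx + dy))³`. -/
theorem sl2_invariance_cubic (a b c d x y z : ℂ)
    (hdet : a * d - b * c = 1) (hz : a + b * z ≠ 0) :
    (x * z - y) ^ 3 =
      (a + b * z) ^ 3 *
        ((a * x + b * y) * ((c + d * z) / (a + b * z)) - (c * x + d * y)) ^ 3 := by
  have key : (a + b * z) *
      ((a * x + b * y) * ((c + d * z) / (a + b * z)) - (c * x + d * y)) = x * z - y := by
    have h : (a + b * z) * ((c + d * z) / (a + b * z)) = c + d * z := mul_div_cancel₀ _ hz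
    linear_combination (a * x + b * y) * h + (x * z - y) * hdet
  rw [← mul_pow, key]
end

section
/- Let U ⊆ ℂ² be a connected open neighborhood of the origin and A, B, C, D holomorphic functions on U; set f(x, y, z) = A(x,y) + B(x,y)z + C(x,y)z² + D(x,y)z³. Suppose that for every a, b, c, d ∈ ℂ with ad − bc = 1, every (x, y) ∈ U with (ax + by, cx + dy) ∈ U, and every z ∈ ℂ with a + bz ≠ 0, one has f(x, y, z) = (a + bz)³ · f(ax + by, cx + dy, (c + dz)/(a + bz)). Then there exists λ ∈ ℂ such that f(x, y, z) = λ(xz − y)³ on U × ℂ, i.e. A(x,y) = −λy³, B(x,y) = 3λxy², C(x,y) = −3λx²y and D(x,y) = λx³ for all (x, y) ∈ U. -/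
/-- The unique projective structure on a connected open neighborhood of the
origin in ℂ² invariant by the linear SL₂(ℂ)-action is `y'' = λ(xy' − y)³` for
some `λ ∈ ℂ`: if `f(x,y,z) = A + Bz + Cz² + Dz³` (with `A,B,C,D` holomorphic
on `U`) satisfies the invariance equation
`f(x,y,z) = (a+bz)³ f(ax+by, cx+dy, (c+dz)/(a+bz))` for all `ad − bc = 1`,
then `A = −λy³`, `B = 3λxy²`, `C = −3λx²y`, `D = λx³` on `U`. -/
theorem sl2_invariant_projective_structure_unique
    (U : Set (ℂ × ℂ)) (hU : IsOpen U) (hconn : IsConnected U)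
    (h0 : (0, 0) ∈ U)
    (A B C D : ℂ × ℂ → ℂ)
    (hA : DifferentiableOn ℂ A U) (hB : DifferentiableOn ℂ B U)
    (hC : DifferentiableOn ℂ C U) (hD : DifferentiableOn ℂ D U)
    (hinv : ∀ a b c d : ℂ, a * d - b * c = 1 →
      ∀ p : ℂ × ℂ, p ∈ U → (a * p.1 + b * p.2, c * p.1 + d * p.2) ∈ U →
      ∀ z : ℂ, a + b * z ≠ 0 →
        A p + B p * z + C p * z ^ 2 + D p * z ^ 3 =
          (a + b * z) ^ 3 *
            (A (a * p.1 + b * p.2, c * p.1 + d * p.2)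
              + B (a * p.1 + b * p.2, c * p.1 + d * p.2) * ((c + d * z) / (a + b * z))
              + C (a * p.1 + b * p.2, c * p.1 + d * p.2) * ((c + d * z) / (a + b * z)) ^ 2
              + D (a * p.1 + b * p.2, c * p.1 + d * p.2) * ((c + d * z) / (a + b * z)) ^ 3)) :
    ∃ lam : ℂ, ∀ p ∈ U,
      A p = -lam * p.2 ^ 3 ∧
      B p = 3 * lam * p.1 * p.2 ^ 2 ∧
      C p = -3 * lam * p.1 ^ 2 * p.2 ∧
      D p = lam * p.1 ^ 3 := by
  -- points on the x-axis
  have haxis : ∀ x : ℂ, (x, (0:ℂ)) ∈ U → A (x, 0) = 0 ∧ B (x, 0) = 0 ∧ C (x, 0) = 0 := by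
    intro x hx
    have key : ∀ b : ℂ, 1 + b ≠ 0 →
        A (x, 0) + B (x, 0) + C (x, 0) + D (x, 0) = A (x, 0) * (1 + b) ^ 3
          + B (x, 0) * (1 + b) ^ 2 + C (x, 0) * (1 + b) + D (x, 0) := by
      intro b hb
      have h := hinv 1 b 0 1 (by ring) (x, 0) hx (by simpa using hx) 1 (by simpa using hb)
      simp only [one_mul, mul_zero, add_zero, zero_mul, mul_one, zero_add, one_pow] at h
      rw [h]
      field_simp
    have k1 := key 1 (by norm_num)
    have k2 := key 2 (by norm_num)
    have k3 := key 3 (by norm_num)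
    have e1 : A (x, 0) = 0 := by linear_combination (-1/2) * k1 + (1/2) * k2 - (1/6) * k3
    rw [e1] at k1 k2
    have e2 : B (x, 0) = 0 := by linear_combination k1 - (1/2) * k2
    rw [e2] at k1
    exact ⟨e1, e2, by linear_combination -k1⟩
  -- a base point
  obtain ⟨t, ht, htU⟩ : ∃ t : ℂ, t ≠ 0 ∧ (t, (0:ℂ)) ∈ U := by
    have hc : Continuous (fun t : ℂ => (t, (0:ℂ))) := by fun_prop
    have hn : ∀ᶠ t in nhds (0:ℂ), (t, (0:ℂ)) ∈ U :=
      hc.continuousAt.eventually (hU.mem_nhds h0)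
    have hn' : ∀ᶠ t in nhdsWithin (0:ℂ) {0}ᶜ, (t, (0:ℂ)) ∈ U := hn.filter_mono nhdsWithin_le_nhds
    obtain ⟨t, h1, h2⟩ := (hn'.and self_mem_nhdsWithin).exists
    exact ⟨t, h2, h1⟩
  obtain ⟨tA, tB, tC⟩ := haxis t htU
  refine ⟨D (t, 0) / t ^ 3, ?_⟩
  rintro ⟨x, y⟩ hp
  have gen : ∀ a b : ℂ, a * x + b * y = t → ∀ z : ℂ, a + b * z ≠ 0 →
      A (x, y) + B (x, y) * z + C (x, y) * z ^ 2 + D (x, y) * z ^ 3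
        = D (t, 0) / t ^ 3 * (x * z - y) ^ 3 := by
    intro a b hab z hz
    have e : (a * x + b * y, -y / t * x + x / t * y) = (t, (0:ℂ)) := by
      rw [hab]; congr 1; ring
    have h := hinv a b (-y / t) (x / t) (by rw [← div_self ht, ← hab]; ring) (x, y) hp
      (by simpa only [e] using htU) z hz
    simp only [e, tA, tB, tC] at h
    rw [h]
    field_simp
    ring
  by_cases hx : x = 0
  · subst hx
    by_cases hy : y = 0
    · subst hy
      obtain ⟨zA, zB, zC⟩ := haxis 0 hp
      have h := hinv 2 0 0 (1/2) (by norm_num) (0, 0) hp (by simpa using hp) 1 (by norm_num)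
      simp only [mul_zero, add_zero, zA, zB, zC] at h
      have zD : D (0, 0) = 0 := by
        norm_num at h
        linear_combination (8/7) * h
      simp [zA, zB, zC, zD]
    · have g := gen 0 (t / y) (by field_simp; ring)
      have hty : t / y ≠ 0 := div_ne_zero ht hy
      have g1 := g 1 (by simpa using ⟨ht, hy⟩)
      have g2 := g (-1) (by simpa using ⟨ht, hy⟩)
      have g3 := g 2 (by simpa using ⟨ht, hy⟩)
      have g4 := g (-2) (by simpa using ⟨ht, hy⟩)
      dsimp only
      refine ⟨?_, ?_, ?_, ?_⟩
      · linear_combination (2/3) * g1 + (2/3) * g2 - (1/6) * g3 - (1/6) * g4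
      · linear_combination (2/3) * g1 - (2/3) * g2 - (1/12) * g3 + (1/12) * g4
      · linear_combination (-1/6) * g1 - (1/6) * g2 + (1/6) * g3 + (1/6) * g4
      · linear_combination (-1/6) * g1 + (1/6) * g2 + (1/12) * g3 - (1/12) * g4
  · have g := gen (t / x) 0 (by field_simp; ring)
    have htx : t / x + 0 ≠ 0 := by simpa using ⟨ht, hx⟩
    have g1 := g 1 (by simpa using ⟨ht, hx⟩)
    have g2 := g (-1) (by simpa using ⟨ht, hx⟩)
    have g3 := g 2 (by simpa using ⟨ht, hx⟩)
    have g4 := g (-2) (by simpa using ⟨ht, hx⟩)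
    dsimp only
    refine ⟨?_, ?_, ?_, ?_⟩
    · linear_combination (2/3) * g1 + (2/3) * g2 - (1/6) * g3 - (1/6) * g4
    · linear_combination (2/3) * g1 - (2/3) * g2 - (1/12) * g3 + (1/12) * g4
    · linear_combination (-1/6) * g1 - (1/6) * g2 + (1/6) * g3 + (1/6) * g4
    · linear_combination (-1/6) * g1 + (1/6) * g2 + (1/12) * g3 - (1/12) * g4
end

section
/- Let x, y, f, p, q ∈ ℂ with y ≠ 0, and let i ∈ ℂ satisfy i² = −1. If y·p + f² = 0, 2f + x·p − y·q = 0, and (x·f − y)³ = p + f·q, then (x·f − y) · ((xy + i)·f − y²) · ((xy − i)·f − y²) = 0. -/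
/-- Elimination of the derivatives in the Borel-invariance and geodesic
equations for `y'' = (xy' − y)³`: if `y ≠ 0`, `i² = −1`, `yp + f² = 0`,
`2f + xp − yq = 0` and `(xf − y)³ = p + fq`, then
`(xf − y)·((xy + i)f − y²)·((xy − i)f − y²) = 0`. -/
theorem borel_invariant_slope_elimination (x y f p q i : ℂ)
    (hy : y ≠ 0) (hi : i ^ 2 = -1)
    (h1 : y * p + f ^ 2 = 0)
    (h2 : 2 * f + x * p - y * q = 0)
    (h3 : (x * f - y) ^ 3 = p + f * q) :
    (x * f - y) * ((x * y + i) * f - y ^ 2) * ((x * y - i) * f - y ^ 2) = 0 := by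
  linear_combination y ^ 2 * h3 - (x * f - y) * f ^ 2 * hi + (y + x * f) * h1 - y * f * h2
end

section
/- Let γ ∈ ℂ, and set α = γ(2γ² − 1), β = 2 − 3γ². For every z ∈ ℂ, the slope field g(x, y) = (eˣ(γy + (2γ² − 1)eˣ) − zγeˣ) / (y + 2γeˣ − z), defined where y + 2γeˣ − z ≠ 0, satisfies ∂g/∂x + g·∂g/∂y = αeˣ + βg + e^{−2x}g³ at every point of its domain; moreover the slope field g_∞(x, y) = γeˣ (corresponding to z = ∞) satisfies the same equation. Hence the pencil of foliations ω_z = [eˣ(γy + (2γ² − 1)eˣ)dx − (y + 2γeˣ)dy] + z[dy − γeˣdx], z ∈ ℙ¹, is a pencil of geodesic foliations for the projective structure y'' = αeˣ + βy' + e^{−2x}(y')³. -/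
open Complex

/-- The slope field of the pencil `ω_z` for the flat projective structure
`y'' = αeˣ + βy' + e^{−2x}(y')³` with `α = γ(2γ² − 1)`, `β = 2 − 3γ²`. -/
noncomputable def pencilSlope (γ z x y : ℂ) : ℂ :=
  (Complex.exp x * (γ * y + (2 * γ ^ 2 - 1) * Complex.exp x) - z * γ * Complex.exp x) /
    (y + 2 * γ * Complex.exp x - z)

/-- For `α = γ(2γ² − 1)` and `β = 2 − 3γ²`, each member of the pencil
`ω_z = [eˣ(γy + (2γ²−1)eˣ)dx − (y + 2γeˣ)dy] + z[dy − γeˣdx]` is geodesic for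
`y'' = αeˣ + βy' + e^{−2x}(y')³`: the slope field
`g(x,y) = (eˣ(γy + (2γ²−1)eˣ) − zγeˣ)/(y + 2γeˣ − z)` satisfies
`∂g/∂x + g∂g/∂y = αeˣ + βg + e^{−2x}g³` on its domain, and so does the slope
field `g_∞(x,y) = γeˣ` corresponding to `z = ∞`. -/
theorem flat_pencil_geodesic (γ : ℂ) :
    (∀ z x y : ℂ, y + 2 * γ * Complex.exp x - z ≠ 0 →
      ∃ gx gy : ℂ,
        HasDerivAt (fun x' : ℂ => pencilSlope γ z x' y) gx x ∧
        HasDerivAt (fun y' : ℂ => pencilSlope γ z x y') gy y ∧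
        gx + pencilSlope γ z x y * gy =
          γ * (2 * γ ^ 2 - 1) * Complex.exp x
            + (2 - 3 * γ ^ 2) * pencilSlope γ z x y
            + Complex.exp (-2 * x) * (pencilSlope γ z x y) ^ 3) ∧
    (∀ x y : ℂ,
      ∃ gx gy : ℂ,
        HasDerivAt (fun x' : ℂ => γ * Complex.exp x') gx x ∧
        HasDerivAt (fun _ : ℂ => γ * Complex.exp x) gy y ∧
        gx + (γ * Complex.exp x) * gy =
          γ * (2 * γ ^ 2 - 1) * Complex.exp x
            + (2 - 3 * γ ^ 2) * (γ * Complex.exp x)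
            + Complex.exp (-2 * x) * (γ * Complex.exp x) ^ 3) := by
  have hexp : ∀ x : ℂ, Complex.exp (-2 * x) = (Complex.exp x ^ 2)⁻¹ := by
    intro x
    rw [← Complex.exp_nat_mul, ← Complex.exp_neg]
    congr 1
    push_cast
    ring
  constructor
  · intro z x y h
    have hE := Complex.exp_ne_zero x
    have he := Complex.hasDerivAt_exp x
    have hi := hasDerivAt_id' y
    have h1 := ((he.mul ((he.const_mul (2 * γ ^ 2 - 1)).const_add (γ * y))).sub
      (he.const_mul (z * γ))).div (((he.const_mul (2 * γ)).const_add y).sub_const z) h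
    have h2 := (((((hi.const_mul γ).add_const ((2 * γ ^ 2 - 1) * Complex.exp x)).const_mul
      (Complex.exp x)).sub_const (z * γ * Complex.exp x))).div
      ((hi.add_const (2 * γ * Complex.exp x)).sub_const z) h
    refine ⟨_, _, h1, h2, ?_⟩
    simp only [pencilSlope, hexp, Pi.mul_apply, Pi.sub_apply, Pi.add_apply]
    generalize Complex.exp x = E at *
    obtain ⟨w, hw⟩ : ∃ w, w = y + 2 * γ * E - z := ⟨_, rfl⟩
    rw [← hw] at h ⊢
    have hy : y = w - 2 * γ * E + z := by rw [hw]; ring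
    subst hy
    field_simp
    ring
  · intro x y
    have hE := Complex.exp_ne_zero x
    refine ⟨_, _, (Complex.hasDerivAt_exp x).const_mul γ, hasDerivAt_const _ _, ?_⟩
    rw [hexp]
    field_simp
    ring
end

section
/- Let λ ∈ ℂ* and z ∈ ℂ. The slope field g(x) = (((1−λ)/2)·e^{(1+λ)x} + z·((1+λ)/2)·eˣ) / (e^{λx} + z), defined (independently of y) where e^{λx} + z ≠ 0, satisfies dg/dx = ((1 − λ²)/4)·eˣ + e^{−x}·g² at every point of its domain. Hence the pencil of foliations ω_z = e^{λx}[dy − ((1−λ)/2)eˣdx] + z[dy − ((1+λ)/2)eˣdx], z ∈ ℙ¹, is a pencil of geodesic foliations for the projective structure y'' = ((1−λ²)/4)·eˣ + e^{−x}(y')². -/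
/-- For `λ ∈ ℂ*`, the slope field
`g(x) = (((1−λ)/2)e^{(1+λ)x} + z((1+λ)/2)eˣ)/(e^{λx} + z)` satisfies
`dg/dx = ((1 − λ²)/4)eˣ + e^{−x}g²` wherever `e^{λx} + z ≠ 0`:
the pencil `ω_z = e^{λx}[dy − ((1−λ)/2)eˣdx] + z[dy − ((1+λ)/2)eˣdx]`
is geodesic for `y'' = ((1−λ²)/4)eˣ + e^{−x}(y')²`. -/
theorem flat_pencil_geodesic_iib1 (lam z : ℂ) (hlam : lam ≠ 0) :
    ∀ x : ℂ, Complex.exp (lam * x) + z ≠ 0 →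
      HasDerivAt
        (fun x' : ℂ =>
          (((1 - lam) / 2) * Complex.exp ((1 + lam) * x')
              + z * ((1 + lam) / 2) * Complex.exp x') /
            (Complex.exp (lam * x') + z))
        (((1 - lam ^ 2) / 4) * Complex.exp x
          + Complex.exp (-x) *
            ((((1 - lam) / 2) * Complex.exp ((1 + lam) * x)
                + z * ((1 + lam) / 2) * Complex.exp x) /
              (Complex.exp (lam * x) + z)) ^ 2) x := by
  intro x hx
  have hl : HasDerivAt (fun t : ℂ => Complex.exp (lam * t)) (Complex.exp (lam * x) * lam) x := by
    simpa using ((hasDerivAt_id x).const_mul lam).cexp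
  have hm : HasDerivAt (fun t : ℂ => Complex.exp ((1 + lam) * t))
      (Complex.exp ((1 + lam) * x) * (1 + lam)) x := by
    simpa using ((hasDerivAt_id x).const_mul (1 + lam)).cexp
  have h := ((hm.const_mul ((1 - lam) / 2)).add
    ((Complex.hasDerivAt_exp x).const_mul (z * ((1 + lam) / 2)))).div (hl.add_const z) hx
  refine h.congr_deriv ?_
  have he : Complex.exp ((1 + lam) * x) = Complex.exp x * Complex.exp (lam * x) := by
    rw [← Complex.exp_add]; ring_nf
  have hE := Complex.exp_ne_zero x
  simp only [Pi.add_apply]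
  rw [he, Complex.exp_neg]
  generalize Complex.exp (lam * x) = L at *
  generalize Complex.exp x = E at *
  field_simp
  ring
end

section
/- Let z ∈ ℂ. The slope field g(x) = eˣ·(x/2 − 1 + z/2) / (x + z), defined (independently of y) where x + z ≠ 0, satisfies dg/dx = (1/4)·eˣ + e^{−x}·g² at every point of its domain. Hence the pencil of foliations ω_z = (1 − x/2)eˣdx + x·dy + z(dy − (1/2)eˣdx), z ∈ ℙ¹, is a pencil of geodesic foliations for the projective structure y'' = (1/4)eˣ + e^{−x}(y')². -/
/-- The slope field `g(x) = eˣ(x/2 − 1 + z/2)/(x + z)` satisfies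
`dg/dx = (1/4)eˣ + e^{−x}g²` wherever `x + z ≠ 0`: the pencil
`ω_z = (1 − x/2)eˣdx + x dy + z(dy − (1/2)eˣdx)` is geodesic for the
projective structure `y'' = (1/4)eˣ + e^{−x}(y')²`. -/
theorem flat_pencil_geodesic_iib2 (z : ℂ) :
    ∀ x : ℂ, x + z ≠ 0 →
      HasDerivAt
        (fun x' : ℂ => Complex.exp x' * (x' / 2 - 1 + z / 2) / (x' + z))
        ((1 / 4) * Complex.exp x
          + Complex.exp (-x) *
            (Complex.exp x * (x / 2 - 1 + z / 2) / (x + z)) ^ 2) x := by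
  intro x hx
  have h1 : HasDerivAt (fun x' : ℂ => x' / 2 - 1 + z / 2) (1 / 2) x :=
    (((hasDerivAt_id x).div_const 2).sub_const 1).add_const (z / 2)
  have h2 : HasDerivAt (fun x' : ℂ => x' + z) 1 x := (hasDerivAt_id x).add_const z
  have h := ((Complex.hasDerivAt_exp x).mul h1).div h2 hx
  refine h.congr_deriv ?_
  have he := Complex.exp_ne_zero x
  simp only [Pi.mul_apply]
  rw [Complex.exp_neg]
  field_simp
  ring
end

section
/- Let h : I → ℂ be a holomorphic function on an open set I ⊆ ℂ and z ∈ ℂ. The slope field s(x, y) = −e^y / (e^y·h(x) + z), defined on the open set of (x, y) ∈ I × ℂ where e^y·h(x) + z ≠ 0, satisfies ∂s/∂x + s·∂s/∂y = (1 + h'(x))·s² + h(x)·s³ at every point of its domain. Hence the pencil of foliations ω_z = e^y(dx + h(x)dy) + z·dy, z ∈ ℙ¹, is a pencil of geodesic foliations for the projective structure y'' = (1 + h'(x))(y')² + h(x)(y')³. -/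
/-- Let `h` be holomorphic on an open set `I ⊆ ℂ` with derivative `h'`. The
slope field `s(x,y) = −e^y/(e^y h(x) + z)` satisfies
`∂s/∂x + s∂s/∂y = (1 + h'(x))s² + h(x)s³` wherever `e^y h(x) + z ≠ 0`:
the pencil `ω_z = e^y(dx + h(x)dy) + z dy` is geodesic for the projective
structure `y'' = (1 + h'(x))(y')² + h(x)(y')³`. -/
theorem flat_pencil_geodesic_ia1 (I : Set ℂ) (hI : IsOpen I)
    (h h' : ℂ → ℂ) (hh : ∀ x ∈ I, HasDerivAt h (h' x) x) (z : ℂ) :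
    ∀ x ∈ I, ∀ y : ℂ, Complex.exp y * h x + z ≠ 0 →
      ∃ sx sy : ℂ,
        HasDerivAt (fun x' : ℂ =>
          -Complex.exp y / (Complex.exp y * h x' + z)) sx x ∧
        HasDerivAt (fun y' : ℂ =>
          -Complex.exp y' / (Complex.exp y' * h x + z)) sy y ∧
        sx + (-Complex.exp y / (Complex.exp y * h x + z)) * sy =
          (1 + h' x) * (-Complex.exp y / (Complex.exp y * h x + z)) ^ 2 +
            h x * (-Complex.exp y / (Complex.exp y * h x + z)) ^ 3 := by
  intro x hx y hD
  have h1 := (hasDerivAt_const x (-Complex.exp y)).div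
    (((hh x hx).const_mul (Complex.exp y)).add_const z) hD
  have h2 := (Complex.hasDerivAt_exp y).neg.div
    (((Complex.hasDerivAt_exp y).mul_const (h x)).add_const z) hD
  refine ⟨_, _, h1, h2, ?_⟩
  simp only [Pi.neg_apply]
  generalize hE : Complex.exp y * h x + z = D at *
  field_simp
  rw [← hE]
  ring
end

section
/- Let u be a holomorphic, nowhere-vanishing function on an open set U ⊆ ℂ², and let t ∈ ℂ*. Then the slope field s(x, y) = −1/(t·u(x, y)) satisfies ∂s/∂x + s·∂s/∂y = −(u_x/u)·s − (u_y/u)·s² at every point of U, where u_x = ∂u/∂x and u_y = ∂u/∂y. Hence every member F_t of the pencil of foliations generated by ω₀ = dx and ω_∞ = u(x,y)dy is geodesic for the projective structure y'' + (u_x/u)·y' + (u_y/u)·(y')² = 0. -/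
/-- Let `u` be holomorphic and nowhere vanishing on an open set `U ⊆ ℂ²`,
with partial derivatives `u_x`, `u_y`, and let `t ∈ ℂ*`. The slope field
`s(x,y) = −1/(t·u(x,y))` satisfies
`∂s/∂x + s∂s/∂y = −(u_x/u)s − (u_y/u)s²` at every point of `U`: every member
of the pencil generated by `ω₀ = dx`, `ω_∞ = u dy` is geodesic for
`y'' + (u_x/u)y' + (u_y/u)(y')² = 0`. -/
theorem pencil_member_geodesic (U : Set (ℂ × ℂ)) (hU : IsOpen U)
    (u ux uy : ℂ × ℂ → ℂ)
    (hu : DifferentiableOn ℂ u U)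
    (hune : ∀ p ∈ U, u p ≠ 0)
    (hux : ∀ p ∈ U, HasDerivAt (fun x : ℂ => u (x, p.2)) (ux p) p.1)
    (huy : ∀ p ∈ U, HasDerivAt (fun y : ℂ => u (p.1, y)) (uy p) p.2)
    (t : ℂ) (ht : t ≠ 0) :
    ∀ p ∈ U, ∃ sx sy : ℂ,
      HasDerivAt (fun x : ℂ => -1 / (t * u (x, p.2))) sx p.1 ∧
      HasDerivAt (fun y : ℂ => -1 / (t * u (p.1, y))) sy p.2 ∧
      sx + (-1 / (t * u p)) * sy =
        -(ux p / u p) * (-1 / (t * u p)) - (uy p / u p) * (-1 / (t * u p)) ^ 2 := by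
  intro p hp
  have hne := hune p hp
  have h1 := (hasDerivAt_const p.1 (-1 : ℂ)).div ((hux p hp).const_mul t) (mul_ne_zero ht hne)
  have h2 := (hasDerivAt_const p.2 (-1 : ℂ)).div ((huy p hp).const_mul t) (mul_ne_zero ht hne)
  refine ⟨_, _, h1, h2, ?_⟩
  simp only [Prod.mk.eta]
  field_simp
  ring
end
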